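/- Let a ∈ M_n(ℚ̄F_∞). For every sofic trace φ on F_∞ (i.e. every trace in the closure, for pointwise convergence on F_∞, of the set of permutational traces) and for any two field embeddings j₁, j₂ : ℚ̄ → ℂ, one has dim_φ(ker j₁(a)) = dim_φ(ker j₂(a)); that is, dim_φ(ker a) does not depend on the embedding ℚ̄ ⊂ ℂ. -/

import Mathlib

open scoped ComplexOrder ENNReal
open Filter Topology Matrix

set_option synthInstance.maxHeartbeats 1000000
set_option maxHeartbeats 1000000

noncomputable section

instance piLpCompleteSpace {ι : Type*} [Fintype ι] (p : ℝ≥0∞) (β : ι → Type*)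
    [∀ i, UniformSpace (β i)] [∀ i, CompleteSpace (β i)] : CompleteSpace (PiLp p β) :=
  PiLp.completeSpace p β

/-- `φ : G → ℂ` is of positive type: for every finite family `g₁, …, g_m` of elements of
`G`, the matrix `(φ (gᵢ⁻¹ gⱼ))_{i,j}` is positive semidefinite. -/
def IsPosType {G : Type*} [Group G] (φ : G → ℂ) : Prop :=
  ∀ (m : ℕ) (g : Fin m → G), (Matrix.of fun i j => φ ((g i)⁻¹ * g j)).PosSemidef

/-- A trace on a (discrete) group: a function of positive type, constant on conjugacy
classes. -/
def IsGroupTrace {G : Type*} [Group G] (φ : G → ℂ) : Prop :=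
  IsPosType φ ∧ ∀ g h : G, φ (h * g * h⁻¹) = φ g

/-- GNS representation data for a function `φ` on a group `G`: a Hilbert space `H`, a
unital algebra morphism `π` from `ℂG = MonoidAlgebra ℂ G` to the bounded operators on `H`
sending group elements to unitaries (this is the condition `star_of`), and a cyclic vector
`ξ` whose matrix coefficient is (the linear extension of) `φ`. -/
structure GNSRep (G : Type*) [Group G] (φ : G → ℂ) where
  H : Type
  [instNormed : NormedAddCommGroup H]
  [instInner : InnerProductSpace ℂ H]
  [instComplete : CompleteSpace H]
  π : MonoidAlgebra ℂ G →ₐ[ℂ] (H →L[ℂ] H)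
  ξ : H
  star_of : ∀ g : G, star (π (MonoidAlgebra.of ℂ G g)) = π (MonoidAlgebra.of ℂ G g⁻¹)
  inner_eq : ∀ g : G, (inner ℂ ξ (π (MonoidAlgebra.of ℂ G g) ξ) : ℂ) = φ g
  cyclic : Dense (Set.range fun x : MonoidAlgebra ℂ G => π x ξ)

attribute [instance] GNSRep.instNormed GNSRep.instInner GNSRep.instComplete

/-- The vector `ξᵢ ∈ Hⁿ`: the cyclic vector `ξ` in the `i`-th summand, `0` elsewhere. -/
def GNSRep.vec {G : Type*} [Group G] {φ : G → ℂ} (R : GNSRep G φ) {n : ℕ} (i : Fin n) :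
    PiLp 2 (fun _ : Fin n => R.H) :=
  (PiLp.continuousLinearEquiv 2 ℂ (fun _ : Fin n => R.H)).symm (Pi.single i R.ξ)

/-- `|x| = (x* x)^{1/2}`, via the continuous functional calculus. -/
def cfcAbs {A : Type*} [CStarAlgebra A] (x : A) : A := cfc Real.sqrt (star x * x)

/-- The set of continuous majorants of `ln₊` on `[0,∞)`.  (Recall that `Real.log 0 = 0`,
so that `Real.log` agrees with `ln₊` on `[0,∞)`.) -/
def lnPlusMajorants : Set (ℝ → ℝ) :=
  {g | ContinuousOn g (Set.Ici 0) ∧ ∀ t ∈ Set.Ici (0:ℝ), Real.log t ≤ g t}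

/-- The action of a matrix `a ∈ Mₙ(R)` on the Hilbert space `H'ⁿ` (with its `ℓ²` inner
product) induced by a morphism `π : R → B(H')`: `(π_n(a) v)_i = Σ_j π(a i j) (v j)`. -/
def matAct {R H' : Type*} [Ring R] [Algebra ℂ R] [NormedAddCommGroup H']
    [InnerProductSpace ℂ H'] {n : ℕ}
    (π : R →ₐ[ℂ] (H' →L[ℂ] H')) (a : Matrix (Fin n) (Fin n) R) :
    PiLp 2 (fun _ : Fin n => H') →L[ℂ] PiLp 2 (fun _ : Fin n => H') :=
  (PiLp.continuousLinearEquiv 2 ℂ _).symm.toContinuousLinearMap ∘L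
    (ContinuousLinearMap.pi fun i => ∑ j, (π (a i j)).comp (ContinuousLinearMap.proj j)) ∘L
    (PiLp.continuousLinearEquiv 2 ℂ _).toContinuousLinearMap

/-- `(φ ⊗ Trₙ)(ln₊ |a|) := inf { Σᵢ ⟨ξᵢ, g(|π(a)|) ξᵢ⟩ : g : [0,∞) → ℝ continuous, g ≥ ln₊ }`,
an element of `ℝ ∪ {−∞}`, computed in the GNS representation `R`. -/
def GNSRep.lnPlusQ {G : Type*} [Group G] {φ : G → ℂ} (R : GNSRep G φ) {n : ℕ}
    (a : Matrix (Fin n) (Fin n) (MonoidAlgebra ℂ G)) : EReal :=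
  ⨅ g ∈ lnPlusMajorants,
    ((∑ i, (inner ℂ (R.vec i) (cfc g (cfcAbs (matAct R.π a)) (R.vec i)) : ℂ)).re : EReal)

/-- A function `φ` on `G` satisfies Lück's condition if `(φ ⊗ Trₙ)(ln₊|a|) ≥ 0` for every
`n ≥ 1` and every `a ∈ Mₙ(ℤG)` (an `a ∈ Mₙ(ℂG)` whose coefficients are all integers),
where the quantity is computed in any GNS representation of `φ`. -/
def SatisfiesLueck {G : Type*} [Group G] (φ : G → ℂ) : Prop :=
  ∀ (n : ℕ), 0 < n → ∀ a : Matrix (Fin n) (Fin n) (MonoidAlgebra ℂ G),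
    (∀ (i j : Fin n) (g : G), ∃ m : ℤ, (a i j).coeff g = (m : ℂ)) →
    ∀ R : GNSRep G φ, 0 ≤ R.lnPlusQ a

/-- `dim_φ(ker a) := inf { Σᵢ ⟨ξᵢ, h(|π(a)|) ξᵢ⟩ : h : [0,∞) → [0,1] continuous, h 0 = 1 }`,
the von Neumann dimension of the kernel of `a`, computed in the GNS representation `R`. -/
def GNSRep.kerDim {G : Type*} [Group G] {φ : G → ℂ} (R : GNSRep G φ) {n : ℕ}
    (a : Matrix (Fin n) (Fin n) (MonoidAlgebra ℂ G)) : ℝ :=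
  sInf {r : ℝ | ∃ h : ℝ → ℝ, ContinuousOn h (Set.Ici 0) ∧
    (∀ t ∈ Set.Ici (0:ℝ), h t ∈ Set.Icc (0:ℝ) 1) ∧ h 0 = 1 ∧
    r = (∑ i, (inner ℂ (R.vec i) (cfc h (cfcAbs (matAct R.π a)) (R.vec i)) : ℂ)).re}

/-- `τ_k(σ) = card {x | σ x = x} / k`, the fixed-point ratio of a permutation. -/
def permFixRatio {k : ℕ} (σ : Equiv.Perm (Fin k)) : ℝ :=
  (Finset.univ.filter fun x => σ x = x).card / k

/-- `δ_k(σ₁, σ₂) = card {x | σ₁ x ≠ σ₂ x} / k`, the normalized Hamming distance. -/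
def permHamming {k : ℕ} (σ₁ σ₂ : Equiv.Perm (Fin k)) : ℝ :=
  (Finset.univ.filter fun x => σ₁ x ≠ σ₂ x).card / k

/-- A permutational trace on `G`: a function of the form `g ↦ τ_k(π g)` for some `k ≥ 1`
and some group homomorphism `π : G → S_k`. -/
def IsPermutationalTrace {G : Type*} [Group G] (ψ : G → ℂ) : Prop :=
  ∃ (k : ℕ) (_ : 0 < k) (π : G →* Equiv.Perm (Fin k)),
    ψ = fun g => (permFixRatio (π g) : ℂ)

/-- Apply a field embedding `j : ℚ̄ → ℂ` coefficientwise to a matrix over the group ring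
`ℚ̄G`, where `ℚ̄ = AlgebraicClosure ℚ` is the field of algebraic numbers. -/
def mapCoeffs {n : ℕ} {G : Type*} [Group G] (j : AlgebraicClosure ℚ →+* ℂ)
    (a : Matrix (Fin n) (Fin n) (MonoidAlgebra (AlgebraicClosure ℚ) G)) :
    Matrix (Fin n) (Fin n) (MonoidAlgebra ℂ G) :=
  fun i i' => MonoidAlgebra.ofCoeff (Finsupp.mapRange j j.map_zero (a i i').coeff)

/-! ### Part 1: matrices over number fields -/

lemma rank_map_field {E L : Type*} [Field E] [Field L] {s : Type*} [Fintype s] [DecidableEq s]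
    (f : E →+* L) (A : Matrix s s E) : (A.map f).rank = A.rank := by
  classical
  obtain ⟨V, U, e, hV, hU, h⟩ := Matrix.exists_rank_normal_form A
  have h2 := congrArg (fun M => (M.map f)) h
  simp only [Matrix.map_mul] at h2
  have hV' : IsUnit (V.map f) := hV.map (RingHom.mapMatrix f)
  have hU' : IsUnit (U.map f) := hU.map (RingHom.mapMatrix f)
  have h3 := congrArg Matrix.rank h2
  rw [Matrix.rank_mul_eq_left_of_isUnit_det _ _ ((Matrix.isUnit_iff_isUnit_det _).1 hU'),
    Matrix.rank_mul_eq_right_of_isUnit_det _ _ ((Matrix.isUnit_iff_isUnit_det _).1 hV')] at h3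
  rw [h3]
  have h4 : (((fromBlocks 1 0 0 0 : Matrix (Fin A.rank ⊕ Fin (Fintype.card s - A.rank))
      (Fin A.rank ⊕ Fin (Fintype.card s - A.rank)) E).submatrix e e).map f) =
      (Matrix.diagonal (Sum.elim (fun _ => 1) (fun _ => 0)) :
        Matrix (Fin A.rank ⊕ Fin (Fintype.card s - A.rank))
      (Fin A.rank ⊕ Fin (Fintype.card s - A.rank)) L).submatrix e e := by
    rw [← Matrix.submatrix_map, Matrix.fromBlocks_map]
    congr 1
    ext i j
    rcases i with i | i <;> rcases j with j | j <;>
      simp [Matrix.diagonal_apply, Matrix.one_apply]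
  rw [h4, Matrix.rank_submatrix, Matrix.rank_diagonal]
  have : Fintype.card {i : Fin A.rank ⊕ Fin (Fintype.card s - A.rank) //
      (Sum.elim (fun _ => (1:L)) (fun _ => 0)) i ≠ 0} = Fintype.card (Fin A.rank) := by
    refine Fintype.card_congr ⟨fun x => match x with
      | ⟨Sum.inl i, _⟩ => i
      | ⟨Sum.inr i, h⟩ => absurd rfl h, fun i => ⟨Sum.inl i, by simp⟩, ?_, ?_⟩
    · rintro ⟨i | i, h⟩
      · rfl
      · exact absurd rfl h
    · intro i; rfl
  simpa using this

lemma root_charpoly_norm_le {s : Type*} [Fintype s] [DecidableEq s] (A : Matrix s s ℂ) (C : ℝ)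
    (hrow : ∀ i, ∑ j, ‖A i j‖ ≤ C) (z : ℂ) (hz : A.charpoly.IsRoot z) : ‖z‖ ≤ C := by
  have hz' : A.charpoly.eval z = 0 := hz
  rw [Matrix.eval_charpoly] at hz'
  obtain ⟨v, hv0, hv⟩ := Matrix.exists_mulVec_eq_zero_iff.2 hz'
  have hne : Nonempty s := by
    by_contra h
    rw [not_nonempty_iff] at h
    exact hv0 (Subsingleton.elim _ _)
  obtain ⟨i, -, hi⟩ := Finset.exists_max_image Finset.univ (fun i => ‖v i‖) Finset.univ_nonempty
  have hvi : 0 < ‖v i‖ := by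
    rw [norm_pos_iff]
    intro h
    apply hv0
    ext j
    have := hi j (Finset.mem_univ _)
    rw [h, norm_zero] at this
    simpa using this
  have h1 := congrFun hv i
  rw [Matrix.sub_mulVec] at h1
  simp only [Matrix.scalar_apply, Pi.sub_apply, Matrix.mulVec_diagonal, Pi.zero_apply] at h1
  have h2 : z * v i = ∑ j, A i j * v j := by
    rw [sub_eq_zero] at h1
    rw [h1]; rfl
  have h3 : ‖z‖ * ‖v i‖ ≤ C * ‖v i‖ := by
    rw [← norm_mul, h2]
    refine (norm_sum_le _ _).trans ?_
    calc ∑ j, ‖A i j * v j‖ ≤ ∑ j, ‖A i j‖ * ‖v i‖ := by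
          refine Finset.sum_le_sum fun j _ => ?_
          rw [norm_mul]
          exact mul_le_mul_of_nonneg_left (hi j (Finset.mem_univ _)) (norm_nonneg _)
      _ = (∑ j, ‖A i j‖) * ‖v i‖ := by rw [Finset.sum_mul]
      _ ≤ _ := mul_le_mul_of_nonneg_right (hrow i) hvi.le
  exact le_of_mul_le_mul_right h3 hvi

open Polynomial in
lemma charpoly_smul_coeff {E : Type*} [Field E] [Infinite E] {s : Type*} [Fintype s]
    [DecidableEq s] (A : Matrix s s E) (m : E) (i : ℕ) :
    (m • A).charpoly.coeff i * m ^ i = m ^ (Fintype.card s) * A.charpoly.coeff i := by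
  have h : (m • A).charpoly.comp (C m * X) = C (m ^ (Fintype.card s)) * A.charpoly := by
    apply Polynomial.funext
    intro r
    simp only [eval_comp, eval_mul, eval_C, eval_X, Matrix.eval_charpoly]
    rw [← Matrix.det_smul]
    congr 1
    ext a b
    simp [Matrix.scalar_apply, Matrix.diagonal_apply]
    split_ifs <;> ring
  have h2 := congrArg (fun p => p.coeff i) h
  simpa only [Polynomial.comp_C_mul_X_coeff, Polynomial.coeff_C_mul] using h2

lemma charpoly_coeff_isIntegral {E : Type*} [Field E] {s : Type*} [Fintype s]
    [DecidableEq s] (A : Matrix s s E) (h : ∀ i j, IsIntegral ℤ (A i j)) (i : ℕ) :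
    IsIntegral ℤ (A.charpoly.coeff i) := by
  let A' : Matrix s s (integralClosure ℤ E) := fun i j => ⟨A i j, h i j⟩
  have : A = A'.map (algebraMap (integralClosure ℤ E) E) := by ext i j; rfl
  rw [this, Matrix.charpoly_map, Polynomial.coeff_map]
  exact (A'.charpoly.coeff i).2

open Polynomial in
lemma prod_X_sub_C_coeff {s : Type*} [Fintype s] [DecidableEq s] (l : s → ℝ) :
    ‖(∏ i, (X - C ((l i : ℝ) : ℂ))).coeff (Finset.univ.filter fun i => l i = 0).card‖ =
      ∏ i ∈ Finset.univ.filter (fun i => l i ≠ 0), |l i| := by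
  rw [← Finset.prod_filter_mul_prod_filter_not Finset.univ (fun i => l i = 0)]
  have h1 : ∏ i ∈ Finset.univ.filter (fun i => l i = 0), (X - C ((l i : ℝ) : ℂ)) =
      X ^ (Finset.univ.filter fun i => l i = 0).card := by
    rw [Finset.prod_congr rfl (g := fun _ => X), Finset.prod_const]
    intro i hi
    simp [(Finset.mem_filter.1 hi).2]
  rw [h1, Polynomial.coeff_X_pow_mul', if_pos le_rfl, Nat.sub_self, coeff_zero_eq_eval_zero,
    eval_prod, norm_prod]
  refine Finset.prod_congr rfl fun i _ => ?_
  simp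

lemma prod_eig_lower {K : Type*} [Field K] [NumberField K] (ι : K →+* ℂ)
    {s : Type*} [Fintype s] [DecidableEq s] (B : Matrix s s K) (m : ℕ) (hm : 0 < m)
    (hintegral : ∀ i j, IsIntegral ℤ ((m : K) * B i j)) (C : ℝ) (hC : 1 ≤ C)
    (hrow : ∀ (σ : K →+* ℂ) i, ∑ j, ‖σ (B i j)‖ ≤ C) (hB : (B.map ι).IsHermitian) :
    1 ≤ ((2 * m * C) ^ (Module.finrank ℚ K)) ^ (Fintype.card s) *
      ∏ i ∈ Finset.univ.filter (fun i => hB.eigenvalues i ≠ 0), |hB.eigenvalues i| := by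
  classical
  set N := Fintype.card s with hN
  set z := (Finset.univ.filter fun i => hB.eigenvalues i = 0).card with hz
  set P := ∏ i ∈ Finset.univ.filter (fun i => hB.eigenvalues i ≠ 0), |hB.eigenvalues i| with hP
  have hP0 : 0 < P := Finset.prod_pos fun i hi => abs_pos.2 (Finset.mem_filter.1 hi).2
  set c := B.charpoly.coeff z with hc
  have hcoef : ∀ σ : K →+* ℂ, σ c = (B.map σ).charpoly.coeff z := by
    intro σ
    rw [Matrix.charpoly_map, Polynomial.coeff_map]
  have hιc : ‖ι c‖ = P := by
    rw [hcoef, hB.charpoly_eq]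
    exact prod_X_sub_C_coeff _
  have hm1 : (1:ℝ) ≤ m := by exact_mod_cast hm
  have hbd : ∀ σ : K →+* ℂ, ‖σ c‖ ≤ (2 * C) ^ N := by
    intro σ
    rw [hc, ← Polynomial.coeff_map]
    have h1 := Polynomial.coeff_le_of_roots_le (p := B.charpoly) (f := σ) (B := C) z
      (Matrix.charpoly_monic _) (IsAlgClosed.splits _) (by
        intro w hw
        rw [← Matrix.charpoly_map] at hw
        exact root_charpoly_norm_le (B.map σ) C (hrow σ) w (Polynomial.isRoot_of_mem_roots hw))
    refine h1.trans ?_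
    rw [Matrix.charpoly_natDegree_eq_dim, mul_pow, mul_comm]
    have h2 : ((N.choose z : ℕ) : ℝ) ≤ 2 ^ N := by exact_mod_cast Nat.choose_le_two_pow N z
    have h3 : C ^ (N - z) ≤ C ^ N := pow_le_pow_right₀ hC (Nat.sub_le _ _)
    gcongr
  have hzN : z ≤ N := by
    rw [hz, hN]; exact Finset.card_le_univ _
  -- the integral element
  have hmK : (m : K) ≠ 0 := by exact_mod_cast hm.ne'
  set d := (m : K) ^ N * c with hd
  have hdint : IsIntegral ℤ d := by
    rw [hd, hc, ← charpoly_smul_coeff]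
    refine IsIntegral.mul (charpoly_coeff_isIntegral _ (by simpa using hintegral) _) ?_
    exact IsIntegral.pow (isIntegral_natCast _) _
  have hd0 : d ≠ 0 := by
    refine mul_ne_zero (pow_ne_zero _ hmK) ?_
    intro h
    rw [h] at hιc
    simp at hιc
    exact hP0.ne hιc
  have hnorm1 : 1 ≤ |((Algebra.norm ℚ d : ℚ) : ℝ)| := by
    have h1 : IsIntegral ℤ (Algebra.norm ℚ d) := Algebra.isIntegral_norm ℚ hdint
    obtain ⟨y, hy⟩ := IsIntegrallyClosed.isIntegral_iff.1 h1
    have hy0 : y ≠ 0 := by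
      rintro rfl
      rw [map_zero] at hy
      exact hd0 (Algebra.norm_eq_zero_iff.1 hy.symm)
    rw [← hy]
    simp only [eq_intCast, Rat.cast_intCast]
    exact_mod_cast Int.one_le_abs hy0
  have hprod := Algebra.norm_eq_prod_embeddings ℚ ℂ d
  have hprod' : |((Algebra.norm ℚ d : ℚ) : ℝ)| = ∏ σ : K →ₐ[ℚ] ℂ, ‖σ d‖ := by
    rw [← norm_prod, ← hprod]
    simp
  rw [hprod'] at hnorm1
  let ι' : K →ₐ[ℚ] ℂ := ι.toRatAlgHom
  have hσd : ∀ σ : K →ₐ[ℚ] ℂ, ‖σ d‖ ≤ (2 * m * C) ^ N := by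
    intro σ
    rw [hd, map_mul, map_pow, map_natCast, norm_mul, norm_pow]
    have := hbd σ
    simp only [Complex.norm_natCast]
    calc (m:ℝ) ^ N * ‖σ c‖ ≤ (m:ℝ)^N * (2 * C)^N := by gcongr; exact this
      _ = _ := by rw [← mul_pow]; ring
  have hιd : ‖ι' d‖ = (m:ℝ) ^ N * P := by
    have : ι' d = ι d := rfl
    rw [this, hd, map_mul, map_pow, map_natCast, norm_mul, norm_pow, hιc]
    simp
  have hcard : Fintype.card (K →ₐ[ℚ] ℂ) = Module.finrank ℚ K := AlgHom.card ℚ K ℂ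
  have hX : 1 ≤ (2 * m * C) ^ N := by
    apply one_le_pow₀; nlinarith
  rw [← Finset.mul_prod_erase _ _ (Finset.mem_univ ι')] at hnorm1
  have h5 : ∏ σ ∈ Finset.univ.erase ι', ‖σ d‖ ≤ ((2 * m * C) ^ N) ^ (Module.finrank ℚ K - 1) := by
    refine (Finset.prod_le_prod (fun _ _ => norm_nonneg _) (fun σ _ => hσd σ)).trans ?_
    rw [Finset.prod_const, Finset.card_erase_of_mem (Finset.mem_univ _), Finset.card_univ, hcard]
  have hpos : 0 < Module.finrank ℚ K := Module.finrank_pos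
  calc 1 ≤ ‖ι' d‖ * ∏ σ ∈ Finset.univ.erase ι', ‖σ d‖ := hnorm1
    _ ≤ ((2 * m * C) ^ N * P) * ((2 * m * C) ^ N) ^ (Module.finrank ℚ K - 1) := by
        rw [hιd]
        gcongr
        nlinarith
    _ = ((2 * m * C) ^ N) ^ (Module.finrank ℚ K - 1 + 1) * P := by rw [pow_succ]; ring
    _ = _ := by rw [Nat.sub_add_cancel hpos, ← pow_mul, ← pow_mul, mul_comm N]

/-! ### Part 2: permutation representations -/

/-- Permutation matrices. -/
def permMat (E : Type*) [Field E] {G : Type*} [Group G] {k : ℕ} (ρ : G →* Equiv.Perm (Fin k)) :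
    G →* Matrix (Fin k) (Fin k) E where
  toFun g := Matrix.of fun u v => if ρ g v = u then 1 else 0
  map_one' := by
    ext u v
    simp [Matrix.one_apply, eq_comm]
  map_mul' g h := by
    ext u v
    simp [Matrix.mul_apply]

/-- Linear extension of the permutation representation. -/
def permRep (E : Type*) [Field E] {G : Type*} [Group G] {k : ℕ} (ρ : G →* Equiv.Perm (Fin k)) :
    MonoidAlgebra E G →ₐ[E] Matrix (Fin k) (Fin k) E :=
  MonoidAlgebra.lift E _ G (permMat E ρ)

lemma permRep_apply (E : Type*) [Field E] {G : Type*} [Group G] {k : ℕ}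
    (ρ : G →* Equiv.Perm (Fin k)) (y : MonoidAlgebra E G) (u v : Fin k) :
    permRep E ρ y u v = ∑ g ∈ y.coeff.support, if ρ g v = u then y.coeff g else 0 := by
  rw [permRep, MonoidAlgebra.lift_apply, Finsupp.sum, Matrix.sum_apply]
  refine Finset.sum_congr rfl fun g _ => ?_
  simp [permMat]

/-- The representation of matrices over the group ring. -/
def bigRep (E : Type*) [Field E] {G : Type*} [Group G] (n : ℕ) {k : ℕ}
    (ρ : G →* Equiv.Perm (Fin k)) :
    Matrix (Fin n) (Fin n) (MonoidAlgebra E G) →ₐ[E] Matrix (Fin n × Fin k) (Fin n × Fin k) E :=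
  (Matrix.compAlgEquiv (Fin n) (Fin k) E E).toAlgHom.comp (permRep E ρ).mapMatrix

lemma bigRep_apply (E : Type*) [Field E] {G : Type*} [Group G] (n : ℕ) {k : ℕ}
    (ρ : G →* Equiv.Perm (Fin k)) (x : Matrix (Fin n) (Fin n) (MonoidAlgebra E G))
    (p q : Fin n × Fin k) : bigRep E n ρ x p q = permRep E ρ (x p.1 q.1) p.2 q.2 := rfl

/-- Apply a ring morphism to coefficients. -/
def mapC {E L : Type*} [Field E] [Field L] {G : Type*} {n : ℕ} (f : E →+* L)
    (x : Matrix (Fin n) (Fin n) (MonoidAlgebra E G)) :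
    Matrix (Fin n) (Fin n) (MonoidAlgebra L G) :=
  fun i i' => MonoidAlgebra.ofCoeff (Finsupp.mapRange f f.map_zero (x i i').coeff)

lemma bigRep_mapC {E L : Type*} [Field E] [Field L] {G : Type*} [Group G] {n k : ℕ}
    (f : E →+* L) (ρ : G →* Equiv.Perm (Fin k))
    (x : Matrix (Fin n) (Fin n) (MonoidAlgebra E G)) :
    bigRep L n ρ (mapC f x) = (bigRep E n ρ x).map f := by
  ext p q
  rw [Matrix.map_apply, bigRep_apply, bigRep_apply, permRep_apply, permRep_apply, map_sum]
  simp only [mapC, MonoidAlgebra.coeff_ofCoeff]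
  rw [Finsupp.support_mapRange_of_injective _ _ f.injective]
  refine Finset.sum_congr rfl fun g _ => ?_
  rw [Finsupp.mapRange_apply, apply_ite f, map_zero]

lemma bigRep_row {E : Type*} [Field E] {G : Type*} [Group G] {n k : ℕ}
    (f : E →+* ℂ) (ρ : G →* Equiv.Perm (Fin k))
    (x : Matrix (Fin n) (Fin n) (MonoidAlgebra E G)) (p : Fin n × Fin k) :
    ∑ q, ‖f (bigRep E n ρ x p q)‖ ≤
      ∑ i, ∑ j, ∑ g ∈ (x i j).coeff.support, ‖f ((x i j).coeff g)‖ := by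
  rw [Fintype.sum_prod_type]
  refine le_trans ?_ (Finset.single_le_sum (f := fun i => ∑ j, ∑ g ∈ (x i j).coeff.support,
    ‖f ((x i j).coeff g)‖) (fun i _ => by positivity) (Finset.mem_univ p.1))
  refine Finset.sum_le_sum fun j _ => ?_
  simp only [bigRep_apply, permRep_apply]
  calc ∑ v, ‖f (∑ g ∈ (x p.1 j).coeff.support, if ρ g v = p.2 then (x p.1 j).coeff g else 0)‖
      ≤ ∑ v, ∑ g ∈ (x p.1 j).coeff.support, 
          if ρ g v = p.2 then ‖f ((x p.1 j).coeff g)‖ else 0 := by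
        refine Finset.sum_le_sum fun v _ => ?_
        rw [map_sum]
        refine (norm_sum_le _ _).trans (le_of_eq ?_)
        refine Finset.sum_congr rfl fun g _ => ?_
        split_ifs <;> simp
    _ = ∑ g ∈ (x p.1 j).coeff.support, ‖f ((x p.1 j).coeff g)‖ := by
        rw [Finset.sum_comm]
        refine Finset.sum_congr rfl fun g _ => ?_
        rw [Finset.sum_eq_single ((ρ g).symm p.2)]
        · simp
        · intro v _ hv
          rw [if_neg]
          intro h
          exact hv (by rw [← h]; simp)
        · simp
    _ ≤ _ := le_rfl

/-- Linear extension of a function on a group. -/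
def linExt {G : Type*} (ψ : G → ℂ) (y : MonoidAlgebra ℂ G) : ℂ :=
  ∑ g ∈ y.coeff.support, y.coeff g * ψ g

lemma trace_bigRep {G : Type*} [Group G] {n k : ℕ} (hk : 0 < k) (ρ : G →* Equiv.Perm (Fin k))
    (x : Matrix (Fin n) (Fin n) (MonoidAlgebra ℂ G)) :
    (bigRep ℂ n ρ x).trace = k * ∑ i, linExt (fun g => (permFixRatio (ρ g) : ℂ)) (x i i) := by
  rw [Matrix.trace, Fintype.sum_prod_type, Finset.mul_sum]
  refine Finset.sum_congr rfl fun i _ => ?_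
  simp only [Matrix.diag_apply, bigRep_apply, permRep_apply, linExt]
  rw [Finset.sum_comm, Finset.mul_sum]
  refine Finset.sum_congr rfl fun g _ => ?_
  rw [← Finset.sum_filter, Finset.sum_const, permFixRatio]
  have : (k : ℂ) ≠ 0 := by exact_mod_cast hk.ne'
  simp only [nsmul_eq_mul]
  push_cast
  field_simp

/-- The involution on the group ring. -/
def starMA {G : Type*} [Group G] (y : MonoidAlgebra ℂ G) : MonoidAlgebra ℂ G :=
  MonoidAlgebra.ofCoeff (Finsupp.equivMapDomain (Equiv.inv G)
    (Finsupp.mapRange (starRingEnd ℂ) (map_zero _) y.coeff))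

lemma starMA_coeff {G : Type*} [Group G] (y : MonoidAlgebra ℂ G) (g : G) :
    (starMA y).coeff g = starRingEnd ℂ (y.coeff g⁻¹) := by
  simp [starMA, Finsupp.equivMapDomain_apply]

lemma starMA_zero {G : Type*} [Group G] : starMA (0 : MonoidAlgebra ℂ G) = 0 := by
  ext g
  simp [starMA_coeff]

lemma starMA_add {G : Type*} [Group G] (y z : MonoidAlgebra ℂ G) :
    starMA (y + z) = starMA y + starMA z := by
  ext g
  simp [starMA_coeff]

lemma starMA_single {G : Type*} [Group G] (g : G) (r : ℂ) :
    starMA (MonoidAlgebra.single g r) = MonoidAlgebra.single g⁻¹ (starRingEnd ℂ r) := by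
  classical
  ext h
  simp only [starMA_coeff, MonoidAlgebra.coeff_single, Finsupp.single_apply]
  by_cases h1 : g = h⁻¹
  · simp [h1]
  · have : g⁻¹ ≠ h := fun h2 => h1 (by rw [← h2, inv_inv])
    simp [h1, this]

/-- The involution on matrices over the group ring. -/
def starMat {G : Type*} [Group G] {n : ℕ} (x : Matrix (Fin n) (Fin n) (MonoidAlgebra ℂ G)) :
    Matrix (Fin n) (Fin n) (MonoidAlgebra ℂ G) := fun i j => starMA (x j i)

lemma permRep_star {G : Type*} [Group G] {k : ℕ} (ρ : G →* Equiv.Perm (Fin k))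
    (y : MonoidAlgebra ℂ G) : permRep ℂ ρ (starMA y) = (permRep ℂ ρ y)ᴴ := by
  induction y using MonoidAlgebra.induction_linear with
  | zero => simp [starMA_zero]
  | add y z hy hz => rw [starMA_add, map_add, map_add, hy, hz, Matrix.conjTranspose_add]
  | single g r =>
    rw [starMA_single, permRep, MonoidAlgebra.lift_single, MonoidAlgebra.lift_single]
    ext u v
    simp only [permMat, MonoidHom.coe_mk, OneHom.coe_mk, map_inv, Matrix.smul_apply,
      Matrix.of_apply, Matrix.conjTranspose_apply, smul_eq_mul, star_mul']
    have : ((ρ g)⁻¹ v = u) ↔ (ρ g u = v) := by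
      rw [Equiv.Perm.inv_eq_iff_eq, eq_comm]
    by_cases h : ρ g u = v
    · rw [if_pos (this.2 h), if_pos h]; simp
    · rw [if_neg (fun h' => h (this.1 h')), if_neg h]; simp

lemma bigRep_star {G : Type*} [Group G] {n k : ℕ} (ρ : G →* Equiv.Perm (Fin k))
    (x : Matrix (Fin n) (Fin n) (MonoidAlgebra ℂ G)) :
    bigRep ℂ n ρ (starMat x) = (bigRep ℂ n ρ x)ᴴ := by
  ext p q
  rw [bigRep_apply, starMat, permRep_star]
  rfl

lemma bigRep_sq {G : Type*} [Group G] {n k : ℕ} (ρ : G →* Equiv.Perm (Fin k))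
    (x : Matrix (Fin n) (Fin n) (MonoidAlgebra ℂ G)) :
    bigRep ℂ n ρ (starMat x * x) = (bigRep ℂ n ρ x)ᴴ * bigRep ℂ n ρ x := by
  rw [map_mul, bigRep_star]

lemma bigRep_psd {G : Type*} [Group G] {n k : ℕ} (ρ : G →* Equiv.Perm (Fin k))
    (x : Matrix (Fin n) (Fin n) (MonoidAlgebra ℂ G)) :
    (bigRep ℂ n ρ (starMat x * x)).PosSemidef := by
  rw [bigRep_sq]
  exact Matrix.posSemidef_conjTranspose_mul_self _

lemma trace_aeval_eig {s : Type*} [Fintype s] [DecidableEq s] (A : Matrix s s ℂ)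
    (hA : A.IsHermitian) (p : Polynomial ℝ) :
    (Polynomial.aeval A p).trace = ((∑ i, p.eval (hA.eigenvalues i) : ℝ) : ℂ) := by
  set U := hA.eigenvectorUnitary
  let Φ : Matrix s s ℂ →ₐ[ℝ] Matrix s s ℂ :=
    ((Unitary.conjStarAlgAut ℂ (Matrix s s ℂ) U).toAlgEquiv.toAlgHom).restrictScalars ℝ
  have h1 : A = Φ (diagonal (RCLike.ofReal ∘ hA.eigenvalues)) := hA.spectral_theorem
  have h2 : Polynomial.aeval A p = Φ (Polynomial.aeval
      (diagonal (RCLike.ofReal ∘ hA.eigenvalues) : Matrix s s ℂ) p) := by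
    conv_lhs => rw [h1]
    rw [Polynomial.aeval_algHom_apply]
  have h3 : ∀ M : Matrix s s ℂ, (Φ M).trace = M.trace := by
    intro M
    have : Φ M = (U : Matrix s s ℂ) * M * (star U : Matrix s s ℂ) := 
      Unitary.conjStarAlgAut_apply (S := ℂ) U M
    rw [this, Matrix.trace_mul_cycle]
    simp
  have h4 : Polynomial.aeval (diagonal (RCLike.ofReal ∘ hA.eigenvalues) : Matrix s s ℂ) p =
      diagonal (fun i => ((p.eval (hA.eigenvalues i) : ℝ) : ℂ)) := by
    have := Polynomial.aeval_algHom_apply (Matrix.diagonalAlgHom ℝ (n := s) (α := ℂ))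
      (RCLike.ofReal ∘ hA.eigenvalues) p
    simp only [Matrix.diagonalAlgHom_apply] at this
    rw [this]
    congr 1
    ext i
    rw [Polynomial.aeval_pi_apply]
    simp only [Function.comp]
    exact Polynomial.aeval_ofReal _ _
  rw [h2, h3, h4, Matrix.trace_diagonal]
  push_cast
  rfl

lemma isAlgebraic_sq {G : Type*} [Group G] {n : ℕ}
    (x : Matrix (Fin n) (Fin n) (MonoidAlgebra ℂ G))
    (hx : ∀ i j g, IsAlgebraic ℚ ((x i j).coeff g)) (i j : Fin n) (g : G) :
    IsAlgebraic ℚ (((starMat x * x) i j).coeff g) := by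
  classical
  have key : ∀ z : ℂ, z ∈ algebraicClosure ℚ ℂ ↔ IsAlgebraic ℚ z := fun z =>
    mem_algebraicClosure_iff
  rw [← key, Matrix.mul_apply, MonoidAlgebra.coeff_sum, Finsupp.finsetSum_apply]
  refine sum_mem fun l _ => ?_
  rw [MonoidAlgebra.coeff_mul, Finsupp.sum]
  refine sum_mem fun g1 _ => ?_
  rw [Finsupp.sum]
  refine sum_mem fun g2 _ => ?_
  split_ifs
  · refine mul_mem ?_ ((key _).2 (hx _ _ _))
    rw [starMat, starMA_coeff, key]
    exact (hx l i g1⁻¹).algHom (starRingEnd ℂ).toRatAlgHom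
  · exact zero_mem _

lemma luck_bound {G : Type*} [Group G] {n : ℕ}
    (x : Matrix (Fin n) (Fin n) (MonoidAlgebra ℂ G))
    (hx : ∀ i j g, IsAlgebraic ℚ ((x i j).coeff g)) :
    ∃ D C : ℝ, 1 ≤ D ∧ 1 ≤ C ∧ ∀ (k : ℕ) (ρ : G →* Equiv.Perm (Fin k))
      (hH : (bigRep ℂ n ρ (starMat x * x)).IsHermitian),
      (1 ≤ D ^ (n * k) *
        ∏ i ∈ Finset.univ.filter (fun i => hH.eigenvalues i ≠ 0), |hH.eigenvalues i|) ∧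
      ∀ i, |hH.eigenvalues i| ≤ C := by
  classical
  set b := starMat x * x with hb
  have hbalg := isAlgebraic_sq x hx
  rw [← hb] at hbalg
  let S : Finset ℂ := Finset.univ.biUnion fun i => Finset.univ.biUnion fun j =>
    (b i j).coeff.support.image (b i j).coeff
  have hS : ∀ i j, ∀ g ∈ (b i j).coeff.support, (b i j).coeff g ∈ S := by
    intro i j g hg
    simp only [S, Finset.mem_biUnion, Finset.mem_univ, true_and, Finset.mem_image]
    exact ⟨i, j, g, hg, rfl⟩
  have hSalg : ∀ z ∈ S, IsAlgebraic ℚ z := by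
    intro z hz
    simp only [S, Finset.mem_biUnion, Finset.mem_univ, true_and, Finset.mem_image] at hz
    obtain ⟨i, j, g, hg, rfl⟩ := hz
    exact hbalg i j g
  let K : IntermediateField ℚ ℂ := IntermediateField.adjoin ℚ (S : Set ℂ)
  have : FiniteDimensional ℚ K :=
    IntermediateField.finiteDimensional_adjoin fun z hz => (hSalg z hz).isIntegral
  have : NumberField K := ⟨⟩
  have hmem : ∀ i j g, (b i j).coeff g ∈ K := by
    intro i j g
    by_cases hg : g ∈ (b i j).coeff.support
    · exact IntermediateField.subset_adjoin ℚ _ (hS i j g hg)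
    · rw [Finsupp.notMem_support_iff.1 hg]; exact zero_mem _
  let lft : ℂ → K := fun r => if h : r ∈ K then ⟨r, h⟩ else 0
  have lft0 : lft 0 = 0 := by
    simp only [lft]
    rw [dif_pos (zero_mem K)]
    rfl
  let b' : Matrix (Fin n) (Fin n) (MonoidAlgebra K G) := fun i j =>
    MonoidAlgebra.ofCoeff (Finsupp.mapRange lft lft0 (b i j).coeff)
  let ι : K →+* ℂ := algebraMap K ℂ
  have hbb' : mapC ι b' = b := by
    ext i j g
    simp only [mapC, b', MonoidAlgebra.coeff_ofCoeff, Finsupp.mapRange_apply, lft]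
    rw [dif_pos (hmem i j g)]
    rfl
  -- denominators
  let S' : Finset K := S.image lft
  have : Algebra.IsAlgebraic ℤ K := by
    have : Algebra.IsAlgebraic ℚ K := inferInstance
    exact ⟨fun z => (IsFractionRing.isAlgebraic_iff ℤ ℚ K).2 (Algebra.IsAlgebraic.isAlgebraic z)⟩
  obtain ⟨y, hy0, hy⟩ := Algebra.IsAlgebraic.exists_integral_multiples ℤ S'
  set m := y.natAbs with hm
  have hm0 : 0 < m := Int.natAbs_pos.2 hy0
  have hmint : ∀ i j g, IsIntegral ℤ ((m : K) * (b' i j).coeff g) := by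
    intro i j g
    have h1 : IsIntegral ℤ (y • (b' i j).coeff g) := by
      by_cases hg : g ∈ (b i j).coeff.support
      · exact hy _ (Finset.mem_image_of_mem _ (hS i j g hg))
      · have : (b' i j).coeff g = 0 := by
          simp only [b', MonoidAlgebra.coeff_ofCoeff, Finsupp.mapRange_apply]
          rw [Finsupp.notMem_support_iff.1 hg, lft0]
        rw [this, smul_zero]
        exact isIntegral_zero
    rw [zsmul_eq_mul] at h1
    rcases Int.natAbs_eq y with h | h
    · rw [h] at h1
      rw [Int.cast_natCast] at h1
      exact h1
    · rw [h] at h1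
      rw [Int.cast_neg, Int.cast_natCast] at h1
      have := h1.neg
      rw [neg_mul, neg_neg] at this
      exact this
  let C0 : ℝ := ∑ σ : K →+* ℂ, ∑ i, ∑ j, ∑ g ∈ (b' i j).coeff.support, ‖σ ((b' i j).coeff g)‖
  have hC0 : ∀ σ : K →+* ℂ, ∑ i, ∑ j, ∑ g ∈ (b' i j).coeff.support, ‖σ ((b' i j).coeff g)‖ ≤ C0 :=
    fun σ => Finset.single_le_sum (f := fun σ : K →+* ℂ =>
      ∑ i, ∑ j, ∑ g ∈ (b' i j).coeff.support, ‖σ ((b' i j).coeff g)‖)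
      (fun σ _ => by positivity) (Finset.mem_univ σ)
  have hC1 : (1:ℝ) ≤ max 1 C0 := le_max_left _ _
  have hm1 : (1:ℝ) ≤ m := by exact_mod_cast hm0
  refine ⟨(2 * m * max 1 C0) ^ (Module.finrank ℚ K), max 1 C0, ?_, hC1, ?_⟩
  · apply one_le_pow₀; nlinarith
  intro k ρ hH
  have hmap : bigRep ℂ n ρ b = (bigRep K n ρ b').map ι := by
    rw [← bigRep_mapC, hbb']
  have hrow : ∀ (σ : K →+* ℂ) p, ∑ q, ‖σ (bigRep K n ρ b' p q)‖ ≤ max 1 C0 := fun σ p =>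
    (bigRep_row σ ρ b' p).trans ((hC0 σ).trans (le_max_right _ _))
  constructor
  · generalize bigRep ℂ n ρ b = B at hH hmap
    subst hmap
    have := prod_eig_lower ι (bigRep K n ρ b') m hm0 ?_ (max 1 C0) hC1 hrow hH
    · simpa using this
    · intro p q
      rw [bigRep_apply, permRep_apply, Finset.mul_sum]
      refine IsIntegral.sum _ fun g _ => ?_
      split_ifs
      · exact hmint _ _ _
      · rw [mul_zero]; exact isIntegral_zero
  · intro i
    have h1 : (bigRep ℂ n ρ b).charpoly.IsRoot (hH.eigenvalues i : ℂ) := by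
      rw [hH.charpoly_eq, Polynomial.IsRoot, Polynomial.eval_prod]
      exact Finset.prod_eq_zero (Finset.mem_univ i) (by simp)
    have h2 := root_charpoly_norm_le (bigRep ℂ n ρ b) (max 1 C0) (by
      intro p
      have := hrow ι p
      rw [hmap]
      exact this) _ h1
    simpa using h2

/-! ### Part 3: the GNS side -/

lemma matAct_apply {R H' : Type*} [Ring R] [Algebra ℂ R] [NormedAddCommGroup H']
    [InnerProductSpace ℂ H'] {n : ℕ} (π : R →ₐ[ℂ] (H' →L[ℂ] H')) (a : Matrix (Fin n) (Fin n) R)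
    (v : PiLp 2 (fun _ : Fin n => H')) (i : Fin n) :
    (matAct π a v) i = ∑ j, π (a i j) (v j) := by
  simp [matAct]

/-- `matAct` as an algebra morphism. -/
def matActHom {R H' : Type*} [Ring R] [Algebra ℂ R] [NormedAddCommGroup H']
    [InnerProductSpace ℂ H'] (n : ℕ) (π : R →ₐ[ℂ] (H' →L[ℂ] H')) :
    Matrix (Fin n) (Fin n) R →ₐ[ℂ]
      (PiLp 2 (fun _ : Fin n => H') →L[ℂ] PiLp 2 (fun _ : Fin n => H')) :=
  AlgHom.ofLinearMap
    { toFun := matAct π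
      map_add' := fun a b => by
        ext v i
        simp [matAct_apply, Finset.sum_add_distrib]
      map_smul' := fun c a => by
        ext v i
        simp [matAct_apply, Finset.smul_sum] }
    (by
      ext v i
      simp only [LinearMap.coe_mk, AddHom.coe_mk, matAct_apply]
      rw [Finset.sum_eq_single i]
      · simp
      · intro j _ hj
        simp [Matrix.one_apply, hj.symm]
      · simp)
    (fun a b => by
      ext v i
      have h : (matAct π a * matAct π b) v = matAct π a (matAct π b v) := rfl
      have h' : ∀ (f g : H' →L[ℂ] H') (w : H'), (f * g) w = f (g w) := fun _ _ _ => rfl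
      simp only [LinearMap.coe_mk, AddHom.coe_mk, h, matAct_apply,
        Matrix.mul_apply, map_sum, map_mul, _root_.sum_apply, h']
      rw [Finset.sum_comm])

lemma matActHom_apply {R H' : Type*} [Ring R] [Algebra ℂ R] [NormedAddCommGroup H']
    [InnerProductSpace ℂ H'] {n : ℕ} (π : R →ₐ[ℂ] (H' →L[ℂ] H')) (a : Matrix (Fin n) (Fin n) R) :
    matActHom n π a = matAct π a := rfl

lemma GNSRep.pi_star {G : Type*} [Group G] {φ : G → ℂ} (R : GNSRep G φ)
    (y : MonoidAlgebra ℂ G) : R.π (starMA y) = star (R.π y) := by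
  induction y using MonoidAlgebra.induction_linear with
  | zero => simp [starMA_zero]
  | add y z hy hz => rw [starMA_add, map_add, map_add, hy, hz, star_add]
  | single g r =>
    have h : ∀ (g : G) (r : ℂ), MonoidAlgebra.single g r = r • MonoidAlgebra.of ℂ G g := by
      intro g r
      simp
    rw [starMA_single, h, h, map_smul, map_smul, star_smul, R.star_of]
    rfl

lemma GNSRep.matAct_star {G : Type*} [Group G] {φ : G → ℂ} (R : GNSRep G φ) {n : ℕ}
    (x : Matrix (Fin n) (Fin n) (MonoidAlgebra ℂ G)) :
    matAct R.π (starMat x) = star (matAct R.π x) := by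
  rw [ContinuousLinearMap.star_eq_adjoint, ContinuousLinearMap.eq_adjoint_iff]
  intro v w
  rw [PiLp.inner_apply, PiLp.inner_apply]
  simp only [matAct_apply, sum_inner, inner_sum]
  rw [Finset.sum_comm]
  refine Finset.sum_congr rfl fun i _ => Finset.sum_congr rfl fun j _ => ?_
  rw [starMat, R.pi_star, ContinuousLinearMap.star_eq_adjoint,
    ContinuousLinearMap.adjoint_inner_left]

lemma GNSRep.inner_pi {G : Type*} [Group G] {φ : G → ℂ} (R : GNSRep G φ)
    (y : MonoidAlgebra ℂ G) : (inner ℂ R.ξ (R.π y R.ξ) : ℂ) = linExt φ y := by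
  have h : y = ∑ g ∈ y.coeff.support, y.coeff g • MonoidAlgebra.of ℂ G g := by
    conv_lhs => rw [← MonoidAlgebra.sum_coeff_single y]
    rw [Finsupp.sum]
    refine Finset.sum_congr rfl fun g _ => ?_
    simp
  conv_lhs => rw [h]
  rw [map_sum, _root_.sum_apply, inner_sum, linExt]
  refine Finset.sum_congr rfl fun g _ => ?_
  rw [map_smul, _root_.smul_apply, inner_smul_right, R.inner_eq]

lemma GNSRep.inner_vec {G : Type*} [Group G] {φ : G → ℂ} (R : GNSRep G φ) {n : ℕ}
    (y : Matrix (Fin n) (Fin n) (MonoidAlgebra ℂ G)) (i : Fin n) :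
    (inner ℂ (R.vec i) (matAct R.π y (R.vec i)) : ℂ) = linExt φ (y i i) := by
  have hv : ∀ j, (R.vec i) j = if j = i then R.ξ else 0 := by
    intro j
    simp [GNSRep.vec, Pi.single_apply]
  rw [PiLp.inner_apply, Finset.sum_eq_single i]
  · rw [matAct_apply, Finset.sum_eq_single i]
    · rw [hv, if_pos rfl, R.inner_pi]
    · intro j _ hj
      rw [hv, if_neg hj, map_zero]
    · simp
  · intro j _ hj
    rw [hv, if_neg hj, inner_zero_left]
  · simp

lemma GNSRep.norm_vec {G : Type*} [Group G] {φ : G → ℂ} (R : GNSRep G φ) {n : ℕ} (i : Fin n) :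
    ‖R.vec i‖ ^ 2 = ‖R.ξ‖ ^ 2 := by
  have hv : ∀ j, (R.vec i) j = if j = i then R.ξ else 0 := by
    intro j
    simp [GNSRep.vec, Pi.single_apply]
  rw [PiLp.norm_sq_eq_of_L2, Finset.sum_eq_single i]
  · rw [hv, if_pos rfl]
  · intro j _ hj
    rw [hv, if_neg hj]; simp
  · simp

/-- The value of a continuous function of `|a|`. -/
def GNSRep.val {G : Type*} [Group G] {φ : G → ℂ} (R : GNSRep G φ) {n : ℕ}
    (a : Matrix (Fin n) (Fin n) (MonoidAlgebra ℂ G)) (h : ℝ → ℝ) : ℝ :=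
  (∑ i, (inner ℂ (R.vec i) (cfc h (cfcAbs (matAct R.π a)) (R.vec i)) : ℂ)).re

lemma cfc_cfcAbs {A : Type*} [CStarAlgebra A] (T : A) (h : ℝ → ℝ)
    (hh : ContinuousOn h (Set.Ici 0)) :
    cfc h (cfcAbs T) = cfc (fun t => h (Real.sqrt t)) (star T * T) := by
  rw [cfcAbs]
  have hsa : IsSelfAdjoint (star T * T) := IsSelfAdjoint.star_mul_self T
  rw [← cfc_comp' h Real.sqrt (star T * T) (hg := ?_) (hf := ?_)]
  · exact hh.mono (by rintro _ ⟨t, _, rfl⟩; exact Real.sqrt_nonneg t)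
  · exact Real.continuous_sqrt.continuousOn

lemma spectrum_star_mul_self_subset {A : Type*} [CStarAlgebra A] (T : A) (t : ℝ)
    (ht : t ∈ spectrum ℝ (star T * T)) : t ∈ Set.Icc (0:ℝ) ‖star T * T‖ := by
  rcases subsingleton_or_nontrivial A with hA | hA
  · exact absurd ht (by simp [spectrum.of_subsingleton])
  have h1 : 0 ≤ t := spectrum_star_mul_self_nonneg t ht
  refine ⟨h1, ?_⟩
  have := spectrum.norm_le_norm_of_mem ht
  rwa [Real.norm_of_nonneg h1] at this

lemma GNSRep.val_approx {G : Type*} [Group G] {φ : G → ℂ} (R : GNSRep G φ) {n : ℕ}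
    (x : Matrix (Fin n) (Fin n) (MonoidAlgebra ℂ G)) (h : ℝ → ℝ)
    (hh : ContinuousOn h (Set.Ici 0)) (p : Polynomial ℝ) (δ M : ℝ) (hδ : 0 ≤ δ)
    (hM : ‖star (matAct R.π x) * matAct R.π x‖ ≤ M)
    (hp : ∀ t ∈ Set.Icc 0 M, |p.eval t - h (Real.sqrt t)| ≤ δ) :
    |R.val x h - (∑ i, linExt φ ((Polynomial.aeval (starMat x * x)
      (p.map (algebraMap ℝ ℂ))) i i)).re| ≤ n * (δ * ‖R.ξ‖ ^ 2) := by
  set T := matAct R.π x with hT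
  have hsa : IsSelfAdjoint (star T * T) := IsSelfAdjoint.star_mul_self T
  have h1 : matAct R.π (Polynomial.aeval (starMat x * x) (p.map (algebraMap ℝ ℂ))) =
      cfc p.eval (star T * T) := by
    rw [cfc_polynomial p (star T * T), ← matActHom_apply, ← Polynomial.aeval_algHom_apply,
      map_mul, matActHom_apply, matActHom_apply, R.matAct_star,
      Polynomial.aeval_map_algebraMap]
  have h2 : ‖cfc h (cfcAbs T) - cfc p.eval (star T * T)‖ ≤ δ := by
    rw [cfc_cfcAbs T h hh, ← cfc_sub (fun t => h (Real.sqrt t)) p.eval (star T * T) ?_ ?_]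
    · refine norm_cfc_le hδ fun t ht => ?_
      have := spectrum_star_mul_self_subset T t ht
      rw [Real.norm_eq_abs, abs_sub_comm]
      exact hp t ⟨this.1, this.2.trans hM⟩
    · exact ContinuousOn.comp hh Real.continuous_sqrt.continuousOn
        (fun t _ => Real.sqrt_nonneg t)
    · exact p.continuous.continuousOn
  have h3 : R.val x h - (∑ i, linExt φ ((Polynomial.aeval (starMat x * x)
      (p.map (algebraMap ℝ ℂ))) i i)).re = 
      (∑ i, (inner ℂ (R.vec i) ((cfc h (cfcAbs T) - cfc p.eval (star T * T)) (R.vec i) ) : ℂ)).re := by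
    rw [GNSRep.val, ← Complex.sub_re, ← Finset.sum_sub_distrib]
    congr 1
    refine Finset.sum_congr rfl fun i _ => ?_
    rw [← R.inner_vec, h1, _root_.sub_apply, inner_sub_right]
  rw [h3]
  refine (Complex.abs_re_le_norm _).trans ((norm_sum_le _ _).trans ?_)
  have h4 : ∀ i ∈ (Finset.univ : Finset (Fin n)), ‖(inner ℂ (R.vec i)
      ((cfc h (cfcAbs T) - cfc p.eval (star T * T)) (R.vec i) ) : ℂ)‖ ≤ δ * ‖R.ξ‖ ^ 2 := by
    intro i _
    refine (norm_inner_le_norm _ _).trans ?_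
    rw [← R.norm_vec i]
    have h5 := ContinuousLinearMap.le_of_opNorm_le _ h2 (R.vec i)
    calc _ ≤ ‖R.vec i‖ * (δ * ‖R.vec i‖) := by gcongr
      _ = _ := by ring
  refine (Finset.sum_le_card_nsmul _ _ _ h4).trans ?_
  simp

/-! ### Part 4: approximation -/

lemma continuous_linExt {G : Type*} (y : MonoidAlgebra ℂ G) :
    Continuous fun ψ : G → ℂ => linExt ψ y := by
  unfold linExt
  fun_prop

lemma perm_val {G : Type*} [Group G] {n k : ℕ} (hk : 0 < k) (ρ : G →* Equiv.Perm (Fin k))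
    (b : Matrix (Fin n) (Fin n) (MonoidAlgebra ℂ G)) (hH : (bigRep ℂ n ρ b).IsHermitian)
    (p : Polynomial ℝ) :
    (∑ i, linExt (fun g => (permFixRatio (ρ g) : ℂ)) ((Polynomial.aeval b
      (p.map (algebraMap ℝ ℂ))) i i)).re = (∑ s, p.eval (hH.eigenvalues s)) / k := by
  have h1 := trace_bigRep hk ρ (Polynomial.aeval b (p.map (algebraMap ℝ ℂ)))
  rw [← Polynomial.aeval_algHom_apply, Polynomial.aeval_map_algebraMap,
    trace_aeval_eig _ hH] at h1
  have hk' : (k : ℝ) ≠ 0 := by exact_mod_cast hk.ne'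
  rw [eq_div_iff hk']
  have h2 := congrArg Complex.re h1
  rw [Complex.ofReal_re, ← Complex.ofReal_natCast, Complex.re_ofReal_mul] at h2
  rw [h2, mul_comm]

lemma weak_conv {G : Type*} [Group G] {φ : G → ℂ} (R : GNSRep G φ) {n : ℕ}
    (x : Matrix (Fin n) (Fin n) (MonoidAlgebra ℂ G)) (h : ℝ → ℝ)
    (hh : ContinuousOn h (Set.Ici 0)) (C δ : ℝ) (hδ : 0 < δ) :
    ∀ᶠ ψ in 𝓝 φ, ∀ (k : ℕ), 0 < k → ∀ (ρ : G →* Equiv.Perm (Fin k))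
      (hH : (bigRep ℂ n ρ (starMat x * x)).IsHermitian),
      ψ = (fun g => (permFixRatio (ρ g) : ℂ)) → (∀ s, hH.eigenvalues s ∈ Set.Icc 0 C) →
      |R.val x h - (∑ s, h (Real.sqrt (hH.eigenvalues s))) / k| ≤ δ := by
  set M := max C ‖star (matAct R.π x) * matAct R.π x‖ with hM
  set Q := n * ‖R.ξ‖ ^ 2 + n + 1 with hQ
  have hQ0 : 0 < Q := by positivity
  set δ' := δ / Q with hδ'
  have hδ'0 : 0 < δ' := by positivity
  have hf : ContinuousOn (fun t => h (Real.sqrt t)) (Set.Icc 0 M) :=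
    ContinuousOn.comp hh Real.continuous_sqrt.continuousOn (fun t _ => Real.sqrt_nonneg t)
  obtain ⟨p, hp⟩ := exists_polynomial_near_of_continuousOn 0 M _ hf δ' hδ'0
  have hval := R.val_approx x h hh p δ' M hδ'0.le (le_max_right _ _) (fun t ht => (hp t ht).le)
  let S : (G → ℂ) → ℝ := fun ψ => (∑ i, linExt ψ ((Polynomial.aeval (starMat x * x)
      (p.map (algebraMap ℝ ℂ))) i i)).re
  have hS : Continuous S := by
    refine Complex.continuous_re.comp (continuous_finsetSum _ fun i _ => continuous_linExt _)
  have hev : ∀ᶠ ψ in 𝓝 φ, |S ψ - S φ| < δ' := by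
    have := hS.tendsto φ
    rw [Metric.tendsto_nhds] at this
    exact this δ' hδ'0
  filter_upwards [hev] with ψ hψ k hk ρ hH hψρ hE
  subst hψρ
  have h1 : S (fun g => (permFixRatio (ρ g) : ℂ)) = (∑ s, p.eval (hH.eigenvalues s)) / k :=
    perm_val hk ρ _ hH p
  have hk' : (0 : ℝ) < k := by exact_mod_cast hk
  have h2 : |(∑ s, p.eval (hH.eigenvalues s)) / k -
      (∑ s, h (Real.sqrt (hH.eigenvalues s))) / k| ≤ n * δ' := by
    rw [← sub_div, ← Finset.sum_sub_distrib, abs_div, abs_of_pos hk', div_le_iff₀ hk']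
    refine (Finset.abs_sum_le_sum_abs _ _).trans ?_
    refine (Finset.sum_le_card_nsmul _ _ δ' fun s _ => ?_).trans ?_
    · exact (hp _ ⟨(hE s).1, (hE s).2.trans (le_max_left _ _)⟩).le
    · simp only [Finset.card_univ, Fintype.card_prod, Fintype.card_fin, nsmul_eq_mul]
      push_cast
      linarith
  rw [h1] at hψ
  have h3 : δ = n * (δ' * ‖R.ξ‖ ^ 2) + δ' + n * δ' := by
    have : δ = δ' * Q := by rw [hδ']; field_simp
    rw [this, hQ]; ring
  have h4 : |R.val x h - S φ| ≤ n * (δ' * ‖R.ξ‖ ^ 2) := hval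
  rw [h3]
  rw [abs_le] at h2 h4 ⊢
  rw [abs_lt] at hψ
  constructor <;> linarith [h2.1, h2.2, h4.1, h4.2, hψ.1, hψ.2]

lemma small_eig_count {s : Type*} [Fintype s] [DecidableEq s] (l : s → ℝ) (D C L : ℝ)
    (hD : 1 ≤ D) (hC : 1 ≤ C) (hl : ∀ i, l i ∈ Set.Icc 0 C) (N : ℕ) (hN : Fintype.card s = N)
    (hprod : 1 ≤ D ^ N * ∏ i ∈ Finset.univ.filter (fun i => l i ≠ 0), |l i|) :
    (Finset.univ.filter (fun i => l i ≠ 0 ∧ l i < Real.exp (-L))).card * L ≤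
      N * (Real.log D + Real.log C) := by
  have hP0 : 0 < ∏ i ∈ Finset.univ.filter (fun i => l i ≠ 0), |l i| :=
    Finset.prod_pos fun i hi => abs_pos.2 (Finset.mem_filter.1 hi).2
  have h1 := Real.log_le_log one_pos hprod
  rw [Real.log_one, Real.log_mul (by positivity) hP0.ne', Real.log_pow,
    Real.log_prod (fun i hi => (abs_pos.2 (Finset.mem_filter.1 hi).2).ne')] at h1
  have hC0 : 0 ≤ Real.log C := Real.log_nonneg hC
  have h2 : ∀ i ∈ Finset.univ.filter (fun i => l i ≠ 0), Real.log |l i| ≤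
      Real.log C - (if l i < Real.exp (-L) then L else 0) := by
    intro i hi
    have hi0 := (Finset.mem_filter.1 hi).2
    have hpos : 0 < l i := lt_of_le_of_ne (hl i).1 (Ne.symm hi0)
    rw [abs_of_pos hpos]
    split_ifs with hlt
    · have := Real.log_le_log hpos hlt.le
      rw [Real.log_exp] at this
      linarith
    · have := Real.log_le_log hpos (hl i).2
      linarith
  have h3 := Finset.sum_le_sum h2
  rw [Finset.sum_sub_distrib, Finset.sum_const, ← Finset.sum_filter, Finset.sum_const,
    Finset.filter_filter, nsmul_eq_mul, nsmul_eq_mul] at h3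
  have h4 : ((Finset.univ.filter (fun i => l i ≠ 0)).card : ℝ) ≤ N := by
    rw [← hN]; exact_mod_cast Finset.card_le_univ _
  have h5 := mul_le_mul_of_nonneg_right h4 hC0
  linarith

lemma GNSRep.val_nonneg {G : Type*} [Group G] {φ : G → ℂ} (R : GNSRep G φ) {n : ℕ}
    (x : Matrix (Fin n) (Fin n) (MonoidAlgebra ℂ G)) (h : ℝ → ℝ)
    (h0 : ∀ t ∈ Set.Ici (0:ℝ), h t ∈ Set.Icc (0:ℝ) 1) : 0 ≤ R.val x h := by
  have hpos : 0 ≤ cfc h (cfcAbs (matAct R.π x)) := by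
    refine cfc_nonneg fun t ht => (h0 t ?_).1
    have h1 : 0 ≤ cfcAbs (matAct R.π x) := cfc_nonneg fun t _ => Real.sqrt_nonneg t
    exact spectrum_nonneg_of_nonneg h1 ht
  rw [ContinuousLinearMap.nonneg_iff_isPositive] at hpos
  rw [GNSRep.val, Complex.re_sum]
  exact Finset.sum_nonneg fun i _ => hpos.re_inner_nonneg_right _

lemma zero_eig_count {s : Type*} [Fintype s] [DecidableEq s] (A : Matrix s s ℂ)
    (hH : (Aᴴ * A).IsHermitian) :
    ((Finset.univ.filter (fun i => hH.eigenvalues i = 0)).card : ℝ) =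
      Fintype.card s - A.rank := by
  have h1 := hH.rank_eq_card_non_zero_eigs
  rw [Matrix.rank_conjTranspose_mul_self, Fintype.card_subtype] at h1
  have h2 := Finset.card_filter_add_card_filter_not (s := Finset.univ)
    (fun i => hH.eigenvalues i = 0)
  rw [Finset.card_univ] at h2
  rw [h1, ← h2]
  push_cast
  ring

lemma approx_kerDim {G : Type*} [Group G] {φ : G → ℂ} (R : GNSRep G φ) {n : ℕ}
    (x : Matrix (Fin n) (Fin n) (MonoidAlgebra ℂ G))
    (hx : ∀ i j g, IsAlgebraic ℚ ((x i j).coeff g)) (η : ℝ) (hη : 0 < η) :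
    ∀ᶠ ψ in 𝓝 φ, ∀ (k : ℕ), 0 < k → ∀ (ρ : G →* Equiv.Perm (Fin k)),
      ψ = (fun g => (permFixRatio (ρ g) : ℂ)) →
      |R.kerDim x - ((n * k - (bigRep ℂ n ρ x).rank : ℝ)) / k| ≤ η := by
  obtain ⟨D, C, hD, hC, hDC⟩ := luck_bound x hx
  set Sx : Set ℝ := {r : ℝ | ∃ h : ℝ → ℝ, ContinuousOn h (Set.Ici 0) ∧
    (∀ t ∈ Set.Ici (0:ℝ), h t ∈ Set.Icc (0:ℝ) 1) ∧ h 0 = 1 ∧ r = R.val x h} with hSx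
  have hker : R.kerDim x = sInf Sx := rfl
  have hbdd : BddBelow Sx := ⟨0, by
    rintro r ⟨h, _, h0, _, rfl⟩
    exact R.val_nonneg x h h0⟩
  have hne : Sx.Nonempty := ⟨_, fun _ => 1, continuousOn_const, fun t _ => by simp, rfl, rfl⟩
  -- upper function
  obtain ⟨r, ⟨h, hhc, hh0, hh1, rfl⟩, hr⟩ := exists_lt_of_csInf_lt hne
    (lt_add_of_pos_right (sInf Sx) (half_pos hη))
  rw [← hker] at hr
  -- lower function
  set A := n * (Real.log D + Real.log C) with hA
  have hA0 : 0 ≤ A := mul_nonneg (Nat.cast_nonneg _)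
    (add_nonneg (Real.log_nonneg hD) (Real.log_nonneg hC))
  set L := 2 * A / η + 1 with hL
  have hL0 : 0 < L := by positivity
  have hAL : A ≤ L * (η / 2) := by
    have : L * (η / 2) = A + η / 2 := by rw [hL]; field_simp
    rw [this]; linarith
  set ε := Real.exp (-L) with hε
  have hε0 : 0 < ε := Real.exp_pos _
  let h' : ℝ → ℝ := fun t => max 0 (1 - t ^ 2 / ε)
  have hh'c : ContinuousOn h' (Set.Ici 0) := by
    apply Continuous.continuousOn
    fun_prop
  have hh'0 : ∀ t ∈ Set.Ici (0:ℝ), h' t ∈ Set.Icc (0:ℝ) 1 := by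
    intro t _
    refine ⟨le_max_left _ _, max_le zero_le_one ?_⟩
    have : 0 ≤ t ^ 2 / ε := by positivity
    linarith
  have hlow : R.kerDim x ≤ R.val x h' := by
    rw [hker]
    exact csInf_le hbdd ⟨h', hh'c, hh'0, by simp [h'], rfl⟩
  filter_upwards [weak_conv R x h hhc C (η / 2) (half_pos hη),
    weak_conv R x h' hh'c C (η / 2) (half_pos hη)] with ψ hψ1 hψ2 k hk ρ hψ
  have hk' : (0 : ℝ) < k := by exact_mod_cast hk
  have hpsd := bigRep_psd ρ x
  have hH : (bigRep ℂ n ρ (starMat x * x)).IsHermitian := hpsd.1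
  obtain ⟨hprod, hle⟩ := hDC k ρ hH
  have hE : ∀ s, hH.eigenvalues s ∈ Set.Icc 0 C := fun s =>
    ⟨hpsd.eigenvalues_nonneg s, (le_abs_self _).trans (hle s)⟩
  have h1 := hψ1 k hk ρ hH hψ hE
  have h2 := hψ2 k hk ρ hH hψ hE
  set Z : ℝ := ((Finset.univ.filter (fun i => hH.eigenvalues i = 0)).card : ℝ) with hZ
  have hZr : Z = n * k - (bigRep ℂ n ρ x).rank := by
    have : ∀ (B : Matrix (Fin n × Fin k) (Fin n × Fin k) ℂ) (hB : B.IsHermitian),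
        B = (bigRep ℂ n ρ x)ᴴ * bigRep ℂ n ρ x →
        ((Finset.univ.filter (fun i => hB.eigenvalues i = 0)).card : ℝ) =
          n * k - (bigRep ℂ n ρ x).rank := by
      intro B hB h
      subst h
      rw [zero_eig_count]
      simp
    exact this _ hH (bigRep_sq ρ x)
  rw [← hZr]
  set W : ℝ := ((Finset.univ.filter
    (fun i => hH.eigenvalues i ≠ 0 ∧ hH.eigenvalues i < Real.exp (-L))).card : ℝ) with hW
  have hWL : W * L ≤ (n * k : ℕ) * (Real.log D + Real.log C) :=
    small_eig_count hH.eigenvalues D C L hD hC hE (n * k) (by simp) hprod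
  have hWk : W / k ≤ η / 2 := by
    rw [div_le_iff₀ hk']
    have h3 : W * L ≤ k * A := by
      refine hWL.trans (le_of_eq ?_)
      rw [hA]; push_cast; ring
    have h4 : k * A ≤ k * (L * (η / 2)) := by gcongr
    refine le_of_mul_le_mul_right ?_ hL0
    calc W * L ≤ k * (L * (η / 2)) := h3.trans h4
      _ = _ := by ring
  -- lower bound of the sum for `h`
  have h5 : Z ≤ ∑ s, h (Real.sqrt (hH.eigenvalues s)) := by
    rw [hZ, Finset.card_eq_sum_ones, Finset.sum_filter]
    push_cast
    refine Finset.sum_le_sum fun s _ => ?_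
    split_ifs with hs
    · rw [hs, Real.sqrt_zero, hh1]
    · exact (hh0 _ (Real.sqrt_nonneg _)).1
  have h6 : ∑ s, h' (Real.sqrt (hH.eigenvalues s)) ≤ Z + W := by
    rw [hZ, hW, Finset.card_eq_sum_ones, Finset.card_eq_sum_ones, Finset.sum_filter,
      Finset.sum_filter]
    push_cast
    rw [← Finset.sum_add_distrib]
    refine Finset.sum_le_sum fun s _ => ?_
    have hs1 := (hh'0 _ (Real.sqrt_nonneg (hH.eigenvalues s))).2
    by_cases hs : hH.eigenvalues s = 0
    · rw [if_pos hs, if_neg (fun hc => hc.1 hs)]; linarith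
    · rw [if_neg hs]
      by_cases hs2 : hH.eigenvalues s < Real.exp (-L)
      · rw [if_pos ⟨hs, hs2⟩]; linarith
      · rw [if_neg (fun hc => hs2 hc.2)]
        simp only [h']
        rw [Real.sq_sqrt (hE s).1]
        have : 1 ≤ hH.eigenvalues s / ε := by
          rw [le_div_iff₀ hε0]; linarith
        exact (max_le le_rfl (by linarith)).trans (by norm_num)
  have h7 : Z / k ≤ (∑ s, h (Real.sqrt (hH.eigenvalues s))) / k := by gcongr
  have h8 : (∑ s, h' (Real.sqrt (hH.eigenvalues s))) / k ≤ Z / k + W / k := by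
    rw [← add_div]; gcongr
  rw [abs_le] at h1 h2 ⊢
  constructor
  · linarith [h1.1, h1.2]
  · linarith [h2.1, h2.2]

lemma mapC_isAlgebraic {G : Type*} [Group G] {n : ℕ} (j : AlgebraicClosure ℚ →+* ℂ)
    (a : Matrix (Fin n) (Fin n) (MonoidAlgebra (AlgebraicClosure ℚ) G)) (i i' : Fin n) (g : G) :
    IsAlgebraic ℚ ((mapCoeffs j a i i').coeff g) := by
  let f : AlgebraicClosure ℚ →ₐ[ℚ] ℂ := { j with commutes' := fun r => by simp }
  have : (mapCoeffs j a i i').coeff g = f ((a i i').coeff g) := rfl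
  rw [this]
  exact ((AlgebraicClosure.isAlgebraic ℚ).isAlgebraic ((a i i').coeff g)).algHom f

/-- for `a ∈ Mₙ(ℚ̄ F_∞)` and any sofic trace `φ` on `F_∞` (a trace in the
pointwise closure of the permutational traces), `dim_φ(ker j(a))` does not depend on the
field embedding `j : ℚ̄ → ℂ`. -/
theorem stmt17 (n : ℕ) (hn : 0 < n)
    (a : Matrix (Fin n) (Fin n) (MonoidAlgebra (AlgebraicClosure ℚ) (FreeGroup ℕ)))
    (φ : FreeGroup ℕ → ℂ)
    (hφ : φ ∈ closure {ψ : FreeGroup ℕ → ℂ | IsPermutationalTrace ψ})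
    (j₁ j₂ : AlgebraicClosure ℚ →+* ℂ) :
    ∀ R : GNSRep (FreeGroup ℕ) φ, R.kerDim (mapCoeffs j₁ a) = R.kerDim (mapCoeffs j₂ a) := by
  intro R
  refine eq_of_forall_dist_le fun η hη => ?_
  have h1 := approx_kerDim R (mapCoeffs j₁ a) (mapC_isAlgebraic j₁ a) (η / 2) (half_pos hη)
  have h2 := approx_kerDim R (mapCoeffs j₂ a) (mapC_isAlgebraic j₂ a) (η / 2) (half_pos hη)
  obtain ⟨ψ, ⟨k, hk, ρ, hψ⟩, h1, h2⟩ :=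
    ((mem_closure_iff_frequently.1 hφ).and_eventually (h1.and h2)).exists
  have h1 := h1 k hk ρ hψ
  have h2 := h2 k hk ρ hψ
  have hr : ∀ j : AlgebraicClosure ℚ →+* ℂ, (bigRep ℂ n ρ (mapCoeffs j a)).rank =
      (bigRep (AlgebraicClosure ℚ) n ρ a).rank := by
    intro j
    have : mapCoeffs j a = mapC j a := rfl
    rw [this, bigRep_mapC, rank_map_field]
  rw [hr j₁] at h1
  rw [hr j₂] at h2
  rw [Real.dist_eq]
  rw [abs_le] at h1 h2 ⊢
  constructor <;> linarith [h1.1, h1.2, h2.1, h2.2]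

end
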